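/- The map λ ↦ ∫_{p₀}^0 (λ − 2Γ(p))^{−3/2} dp is strictly decreasing on (2Γ_max, ∞), tends to 0 as λ → ∞, and tends to ∞ as λ decreases to 2Γ_max. Consequently, there exists a unique λ₀ ∈ (2Γ_max, ∞) such that g·∫_{p₀}^0 (λ₀ − 2Γ(p))^{−3/2} dp = 1. -/

import Mathlib

open Set Filter

/-!
Let `f ≤ M` and `r < 0`. For `lam > M` the integrand `(lam - f x) ^ r` is bounded by
`(lam - M) ^ r`, which gives integrability, continuity in `lam` and decay at infinity; strict
monotonicity is pointwise. The blow-up at `M` is a Chebyshev estimate: on `{x | M - f x ≤ t}` the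
integrand at `lam = M + t` is at least `(2 * t) ^ r`, so the integral diverges as soon as that set
has measure at least a multiple of `t ^ s` with `s < -r`. When `f` is `α`-Hölder on an interval and
`M` is its maximum, the set contains an interval of length of order `t ^ (1 / α)`.
-/

open MeasureTheory Topology
open scoped NNReal

lemma existsUnique_mem_Ioi_and_eq_of_injOn {F : ℝ → ℝ} {M v y : ℝ}
    (hinj : InjOn F (Ioi M)) (hcont : ContinuousOn F (Ioi M))
    (htop : Tendsto F (𝓝[>] M) atTop) (hv : Tendsto F atTop (𝓝 v)) (hy : v < y) :
    ∃! x, x ∈ Ioi M ∧ F x = y := by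
  obtain ⟨x, hx, hxy⟩ := isPreconnected_Ioi.intermediate_value_Ioi (l₂ := 𝓝[>] M)
    (le_principal_iff.2 (Ioi_mem_atTop M)) inf_le_right hcont hv htop hy
  exact ⟨x, ⟨hx, hxy⟩, fun z hz ↦ hinj hz.1 hx (hz.2.trans hxy.symm)⟩

section ConstSubRpow

variable {X : Type*} [MeasurableSpace X] {μ : Measure X} {f : X → ℝ} {M r s c : ℝ}

lemma norm_const_sub_rpow_le {y lam₀ lam : ℝ} (hr : r ≤ 0) (hy : y ≤ M) (hM : M < lam₀)
    (hlam : lam₀ ≤ lam) : ‖(lam - y) ^ r‖ ≤ (lam₀ - M) ^ r := by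
  rw [Real.norm_of_nonneg (Real.rpow_nonneg (by linarith) r)]
  exact Real.rpow_le_rpow_of_nonpos (by linarith) (by linarith) hr

lemma aestronglyMeasurable_const_sub_rpow (hf : AEMeasurable f μ) (r lam : ℝ) :
    AEStronglyMeasurable (fun x ↦ (lam - f x) ^ r) μ :=
  ((hf.const_sub lam).pow_const r).aestronglyMeasurable

variable [IsFiniteMeasure μ]

lemma integrable_const_sub_rpow (hf : AEMeasurable f μ) (hfM : ∀ᵐ x ∂μ, f x ≤ M) (hr : r ≤ 0)
    {lam : ℝ} (hlam : M < lam) : Integrable (fun x ↦ (lam - f x) ^ r) μ :=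
  .of_bound (aestronglyMeasurable_const_sub_rpow hf r lam) ((lam - M) ^ r)
    (hfM.mono fun _ hx ↦ norm_const_sub_rpow_le hr hx hlam le_rfl)

theorem strictAntiOn_integral_const_sub_rpow [NeZero μ] (hf : AEMeasurable f μ)
    (hfM : ∀ᵐ x ∂μ, f x ≤ M) (hr : r < 0) :
    StrictAntiOn (fun lam ↦ ∫ x, (lam - f x) ^ r ∂μ) (Ioi M) := by
  intro lam₁ hlam₁ lam₂ hlam₂ hlt
  have hpointwise : ∀ᵐ x ∂μ, (lam₂ - f x) ^ r < (lam₁ - f x) ^ r := by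
    filter_upwards [hfM] with x hx
    have := mem_Ioi.1 hlam₁
    exact Real.rpow_lt_rpow_of_neg (by linarith) (by linarith) hr
  have hint₁ := integrable_const_sub_rpow hf hfM hr.le hlam₁
  have hint₂ := integrable_const_sub_rpow hf hfM hr.le hlam₂
  have hle : (fun x ↦ (lam₂ - f x) ^ r) ≤ᵐ[μ] fun x ↦ (lam₁ - f x) ^ r :=
    hpointwise.mono fun _ ↦ le_of_lt
  refine (integral_mono_ae hint₂ hint₁ hle).lt_of_ne fun heq ↦ ?_
  have hae := (integral_eq_iff_of_ae_le hint₂ hint₁ hle).1 heq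
  obtain ⟨x, hx_lt, hx_eq⟩ := (hpointwise.and hae).exists
  exact hx_lt.ne hx_eq

theorem continuousOn_integral_const_sub_rpow (hf : AEMeasurable f μ) (hfM : ∀ᵐ x ∂μ, f x ≤ M)
    (hr : r ≤ 0) : ContinuousOn (fun lam ↦ ∫ x, (lam - f x) ^ r ∂μ) (Ioi M) := by
  intro lam hlam
  obtain ⟨lam₀, hM, hlt⟩ := exists_between (mem_Ioi.1 hlam)
  refine (continuousAt_of_dominated (bound := fun _ ↦ (lam₀ - M) ^ r)
    (.of_forall (aestronglyMeasurable_const_sub_rpow hf r)) ?_ (integrable_const _)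
    ?_).continuousWithinAt
  · filter_upwards [lt_mem_nhds hlt] with lam' hlam'
    exact hfM.mono fun x hx ↦ norm_const_sub_rpow_le hr hx hM hlam'.le
  · filter_upwards [hfM] with x hx
    have hne : lam - f x ≠ 0 := by linarith
    exact (continuousAt_id.sub continuousAt_const).rpow_const (.inl hne)

theorem tendsto_integral_const_sub_rpow_atTop (hfM : ∀ᵐ x ∂μ, f x ≤ M) (hr : r < 0) :
    Tendsto (fun lam ↦ ∫ x, (lam - f x) ^ r ∂μ) atTop (𝓝 0) := by
  have hbound : Tendsto (fun lam ↦ (lam - M) ^ r * μ.real univ) atTop (𝓝 0) := by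
    have hrpow : Tendsto (fun t : ℝ ↦ t ^ r) atTop (𝓝 0) := by
      simpa only [neg_neg] using tendsto_rpow_neg_atTop (neg_pos.2 hr)
    have hsub : Tendsto (fun lam ↦ lam - M) atTop atTop :=
      tendsto_atTop_add_const_right atTop (-M) tendsto_id
    simpa only [zero_mul, Function.comp_def] using (hrpow.comp hsub).mul_const (μ.real univ)
  refine squeeze_zero_norm' ?_ hbound
  filter_upwards [eventually_gt_atTop M] with lam hlam
  exact norm_integral_le_of_norm_le_const
    (hfM.mono fun x hx ↦ norm_const_sub_rpow_le hr.le hx hlam le_rfl)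

lemma rpow_mul_measureReal_le_integral_const_sub_rpow (hf : AEMeasurable f μ)
    (hfM : ∀ᵐ x ∂μ, f x ≤ M) (hr : r ≤ 0) {lam : ℝ} (hlam : M < lam) {t : ℝ}
    (ht : 0 ≤ t) :
    (lam - M + t) ^ r * μ.real {x | M - f x ≤ t} ≤ ∫ x, (lam - f x) ^ r ∂μ := by
  have hmono : μ.real {x | M - f x ≤ t} ≤
      μ.real {x | (lam - M + t) ^ r ≤ (lam - f x) ^ r} := by
    refine ENNReal.toReal_mono (measure_ne_top _ _) (measure_mono_ae (hfM.mono fun x hx hxt ↦ ?_))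
    have : M - f x ≤ t := hxt
    exact Real.rpow_le_rpow_of_nonpos (by linarith) (by linarith) hr
  have hnonneg : 0 ≤ᵐ[μ] fun x ↦ (lam - f x) ^ r :=
    hfM.mono fun x hx ↦ Real.rpow_nonneg (by linarith) r
  calc (lam - M + t) ^ r * μ.real {x | M - f x ≤ t}
      ≤ (lam - M + t) ^ r * μ.real {x | (lam - M + t) ^ r ≤ (lam - f x) ^ r} :=
        mul_le_mul_of_nonneg_left hmono (Real.rpow_nonneg (by linarith) r)
    _ ≤ ∫ x, (lam - f x) ^ r ∂μ :=
        mul_meas_ge_le_integral_of_nonneg hnonneg (integrable_const_sub_rpow hf hfM hr hlam) _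

theorem tendsto_integral_const_sub_rpow_nhdsGT (hf : AEMeasurable f μ) (hfM : ∀ᵐ x ∂μ, f x ≤ M)
    (hr : r ≤ 0) (hc : 0 < c) (hrs : r + s < 0)
    (hgrowth : ∀ᶠ t in 𝓝[>] 0, c * t ^ s ≤ μ.real {x | M - f x ≤ t}) :
    Tendsto (fun lam ↦ ∫ x, (lam - f x) ^ r ∂μ) (𝓝[>] M) atTop := by
  have hsub : Tendsto (fun lam ↦ lam - M) (𝓝[>] M) (𝓝[>] 0) := by
    refine tendsto_nhdsWithin_iff.2 ⟨?_, ?_⟩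
    · exact ((continuous_sub_right M).tendsto' M 0 (sub_self M)).mono_left nhdsWithin_le_nhds
    · exact eventually_mem_nhdsWithin.mono fun _ hlam ↦ mem_Ioi.2 (sub_pos.2 hlam)
  have hdiv : Tendsto (fun lam ↦ 2 ^ r * c * (lam - M) ^ (r + s)) (𝓝[>] M) atTop :=
    ((tendsto_rpow_neg_nhdsGT_zero hrs).comp hsub).const_mul_atTop (by positivity)
  refine tendsto_atTop_mono' _ ?_ hdiv
  filter_upwards [self_mem_nhdsWithin, hsub.eventually hgrowth] with lam hlam hmeas
  have hpos : 0 < lam - M := sub_pos.2 hlam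
  calc 2 ^ r * c * (lam - M) ^ (r + s)
      = (lam - M + (lam - M)) ^ r * (c * (lam - M) ^ s) := by
        rw [← two_mul, Real.mul_rpow zero_le_two hpos.le, Real.rpow_add hpos]
        ring
    _ ≤ (lam - M + (lam - M)) ^ r * μ.real {x | M - f x ≤ lam - M} := by gcongr
    _ ≤ ∫ x, (lam - f x) ^ r ∂μ :=
        rpow_mul_measureReal_le_integral_const_sub_rpow hf hfM hr hlam hpos.le

end ConstSubRpow

section Interval

variable {a b q : ℝ}

lemma le_volume_real_Icc_inter_closedBall {d : ℝ} (hq : q ∈ Icc a b) (hd : 0 ≤ d)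
    (hdab : d ≤ b - a) : d ≤ volume.real (Icc a b ∩ Metric.closedBall q d) := by
  rw [Real.closedBall_eq_Icc, Icc_inter_Icc, Real.volume_real_Icc]
  grind

lemma eventually_rpow_le_volume_real_of_holderOnWith {f : ℝ → ℝ} {C α : ℝ≥0} (hab : a < b)
    (hα : 0 < α) (hf : HolderOnWith C α f (Icc a b)) (hq : q ∈ Icc a b) :
    ∀ᶠ t in 𝓝[>] 0, ((C : ℝ) + 1)⁻¹ ^ (α : ℝ)⁻¹ * t ^ (α : ℝ)⁻¹ ≤
      (volume.restrict (Icc a b)).real {p | f q - f p ≤ t} := by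
  have hα' : (0 : ℝ) < α := NNReal.coe_pos.2 hα
  set radius : ℝ → ℝ := fun t ↦ ((C : ℝ) + 1)⁻¹ ^ (α : ℝ)⁻¹ * t ^ (α : ℝ)⁻¹ with hradius
  have hsmall : ∀ᶠ t in 𝓝 0, radius t ≤ b - a := by
    have hcont : Continuous radius :=
      continuous_const.mul (Real.continuous_rpow_const (inv_nonneg.2 hα'.le))
    have hzero : radius 0 = 0 := by
      simp only [hradius, Real.zero_rpow (inv_ne_zero hα'.ne'), mul_zero]
    exact (hcont.tendsto' 0 0 hzero).eventually_le_const (sub_pos.2 hab)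
  filter_upwards [self_mem_nhdsWithin, hsmall.filter_mono nhdsWithin_le_nhds]
    with t (ht : 0 < t) hle
  have hradius_rpow : radius t ^ (α : ℝ) = ((C : ℝ) + 1)⁻¹ * t := by
    simp only [hradius]
    rw [← Real.mul_rpow (by positivity) ht.le, Real.rpow_inv_rpow (by positivity) hα'.ne']
  have hsubset : Icc a b ∩ Metric.closedBall q (radius t) ⊆ {p | f q - f p ≤ t} ∩ Icc a b := by
    rintro p ⟨hp, hpq⟩
    refine ⟨?_, hp⟩
    calc f q - f p ≤ dist (f q) (f p) := le_abs_self _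
      _ ≤ C * radius t ^ (α : ℝ) := hf.dist_le_of_le hq hp (Metric.mem_closedBall'.1 hpq)
      _ = C / (C + 1) * t := by rw [hradius_rpow]; ring
      _ ≤ t := mul_le_of_le_one_left ht.le (div_le_one_of_le₀ (by linarith) (by positivity))
  calc radius t ≤ volume.real (Icc a b ∩ Metric.closedBall q (radius t)) :=
        le_volume_real_Icc_inter_closedBall hq (by positivity) hle
    _ ≤ volume.real ({p | f q - f p ≤ t} ∩ Icc a b) :=
        measureReal_mono hsubset (measure_ne_top_of_subset inter_subset_right (by simp))
    _ = (volume.restrict (Icc a b)).real {p | f q - f p ≤ t} :=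
        (measureReal_restrict_apply' measurableSet_Icc).symm

theorem stmt_0_general {f : ℝ → ℝ} {C α : ℝ≥0} {r g : ℝ} (hab : a < b)
    (hα : 0 < α) (hf : HolderOnWith C α f (Icc a b)) (hr : r < -(α : ℝ)⁻¹) (hg : 0 < g) :
    StrictAntiOn (fun lam ↦ ∫ p in a..b, (lam - f p) ^ r) (Ioi (sSup (f '' Icc a b))) ∧
    Tendsto (fun lam ↦ ∫ p in a..b, (lam - f p) ^ r) atTop (𝓝 0) ∧
    Tendsto (fun lam ↦ ∫ p in a..b, (lam - f p) ^ r) (𝓝[>] sSup (f '' Icc a b)) atTop ∧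
    ∃! lam₀, lam₀ ∈ Ioi (sSup (f '' Icc a b)) ∧ g * ∫ p in a..b, (lam₀ - f p) ^ r = 1 := by
  have hα' : (0 : ℝ) < (α : ℝ)⁻¹ := inv_pos.2 (NNReal.coe_pos.2 hα)
  have hcont := hf.continuousOn hα
  have hmeas : AEMeasurable f (volume.restrict (Icc a b)) := hcont.aemeasurable measurableSet_Icc
  have hr₀ : r < 0 := by linarith
  have : NeZero (volume.restrict (Icc a b)) := ⟨by simp [Measure.restrict_eq_zero, hab]⟩
  obtain ⟨q, hq, hsup, hmax⟩ :=
    isCompact_Icc.exists_sSup_image_eq_and_ge (nonempty_Icc.2 hab.le) hcont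
  have hfM : ∀ᵐ p ∂volume.restrict (Icc a b), f p ≤ f q :=
    (ae_restrict_mem measurableSet_Icc).mono hmax
  simp only [hsup, intervalIntegral.integral_of_le hab.le, ← integral_Icc_eq_integral_Ioc]
  have hanti := strictAntiOn_integral_const_sub_rpow hmeas hfM hr₀
  have hzero := tendsto_integral_const_sub_rpow_atTop hfM hr₀
  have htop := tendsto_integral_const_sub_rpow_nhdsGT hmeas hfM hr₀.le (by positivity) (by linarith)
    (eventually_rpow_le_volume_real_of_holderOnWith hab hα hf hq)
  refine ⟨hanti, hzero, htop, ?_⟩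
  simp only [mul_eq_one_iff_inv_eq₀ hg.ne', eq_comm (a := g⁻¹)]
  exact existsUnique_mem_Ioi_and_eq_of_injOn hanti.injOn
    (continuousOn_integral_const_sub_rpow hmeas hfM hr₀.le) htop hzero (inv_pos.2 hg)

end Interval

/-- The map `λ ↦ ∫_{p₀}^0 (λ − 2Γ(p))^{−3/2} dp` is strictly decreasing on
`(2Γ_max, ∞)`, tends to `0` as `λ → ∞`, and tends to `∞` as `λ` decreases to `2Γ_max`.
Consequently, there exists a unique `λ₀ ∈ (2Γ_max, ∞)` with
`g·∫_{p₀}^0 (λ₀ − 2Γ(p))^{−3/2} dp = 1`. -/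
theorem stmt_0 (p₀ g : ℝ) (hp₀ : p₀ < 0) (hg : 0 < g)
    (Γ : ℝ → ℝ) (K : NNReal) (hΓ : LipschitzOnWith K Γ (Set.Icc p₀ 0)) :
    StrictAntiOn (fun lam : ℝ => ∫ p in p₀..0, (lam - 2 * Γ p) ^ (-(3 : ℝ) / 2))
      (Set.Ioi (2 * sSup (Γ '' Set.Icc p₀ 0))) ∧
    Tendsto (fun lam : ℝ => ∫ p in p₀..0, (lam - 2 * Γ p) ^ (-(3 : ℝ) / 2))
      atTop (nhds 0) ∧
    Tendsto (fun lam : ℝ => ∫ p in p₀..0, (lam - 2 * Γ p) ^ (-(3 : ℝ) / 2))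
      (nhdsWithin (2 * sSup (Γ '' Set.Icc p₀ 0)) (Set.Ioi (2 * sSup (Γ '' Set.Icc p₀ 0))))
      atTop ∧
    ∃! lam₀ : ℝ, lam₀ ∈ Set.Ioi (2 * sSup (Γ '' Set.Icc p₀ 0)) ∧
      g * ∫ p in p₀..0, (lam₀ - 2 * Γ p) ^ (-(3 : ℝ) / 2) = 1 := by
  have hsup : sSup ((fun p ↦ 2 * Γ p) '' Icc p₀ 0) = 2 * sSup (Γ '' Icc p₀ 0) := by
    rw [← smul_eq_mul, ← Real.sSup_smul_of_nonneg zero_le_two, ← image_smul, image_image]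
    simp only [smul_eq_mul]
  have hHolder := holderOnWith_one.2 ((lipschitzWith_smul (2 : ℝ)).comp_lipschitzOnWith hΓ)
  simpa only [hsup] using stmt_0_general hp₀ (f := fun p ↦ 2 * Γ p) one_pos hHolder (by norm_num) hg
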